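/- For every M > 0 there exists a single-buyer pricing instance with signals whose conditional value distribution given each signal is regular, together with an ex post individually rational, Bayesian incentive compatible mechanism (which makes negative payments, i.e. sometimes pays the buyer), whose expected revenue is at least M times the optimal revenue under public signals DRev of that instance. -/

import Mathlib

open MeasureTheory Set

/-- A single-buyer pricing instance with signals: a measurable space `S` of signals with a
σ-finite measure `μ`, and a measurable joint density `f` on values `t ∈ ℝ_{≥0}` and
signals `s ∈ S` with total integral `1`. -/
structure SignalInstance where
  /-- the signal space -/
  (S : Type)
  [mS : MeasurableSpace S]
  /-- a σ-finite measure on the signal space -/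
  (μ : MeasureTheory.Measure S)
  (sigmaFinite : MeasureTheory.SigmaFinite μ)
  /-- the joint density of (value, signal) -/
  (f : ℝ → S → ℝ)
  (f_meas : Measurable fun q : ℝ × S => f q.1 q.2)
  (f_nonneg : ∀ t s, 0 ≤ f t s)
  (f_zero : ∀ t s, t < 0 → f t s = 0)
  (f_prob : ∫ s, (∫ t in Set.Ici (0:ℝ), f t s) ∂μ = 1)

attribute [instance] SignalInstance.mS

/-- The expected revenue of a mechanism with payment rule `p` on instance `I`. -/
noncomputable def SignalInstance.Rev (I : SignalInstance) (p : ℝ → I.S → ℝ) : ℝ :=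
  ∫ s, (∫ t in Set.Ici (0:ℝ), I.f t s * p t s) ∂I.μ

/-- The optimal revenue under public signals (naïve pricing revenue):
`DRev = ∫_S sup_{r≥0} r·(∫_{t≥r} f(t,s) dt) dμ(s)`. -/
noncomputable def SignalInstance.DRev (I : SignalInstance) : ℝ :=
  ∫ s, sSup {y : ℝ | ∃ r : ℝ, 0 ≤ r ∧ y = r * ∫ t in Set.Ici r, I.f t s} ∂I.μ

/-!
Values are split into dyadic levels, and signal `k` comes with an equal-revenue distribution on the
values of level at most `k`, so that a public signal is worth at most a constant. A value of level
`j` then sees the signals from `j` on with equal likelihood. The mechanism sells it the item at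
price `2 ^ j` at the first `L` of them, and at signal `j` pays back all but `K * 2 ^ j` of the
total. Overreporting buys the item equally often for a larger total payment. Underreporting loses
the bonus, whose signal is invisible to higher levels, and it loses sales as well; for
`L ≥ K * (1 + 2 ^ K)` it never pays. The expected payment is of order `K * t`, so each level
contributes revenue of order `K`.
-/

lemma integral_inv_sq {a b : ℝ} (h : (0 : ℝ) ∉ uIcc a b) :
    ∫ t in a..b, (t ^ 2)⁻¹ = a⁻¹ - b⁻¹ := by
  calc ∫ t in a..b, (t ^ 2)⁻¹ = ∫ t in a..b, t ^ (-2 : ℤ) := by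
        simp only [zpow_neg, zpow_ofNat]
    _ = (b ^ (-2 + 1 : ℤ) - a ^ (-2 + 1 : ℤ)) / ((-2 : ℤ) + 1) :=
        integral_zpow (Or.inr ⟨by norm_num, h⟩)
    _ = a⁻¹ - b⁻¹ := by norm_num [div_neg]

lemma integral_Icc_one_inv {a : ℝ} (ha : 1 ≤ a) : ∫ t in Icc 1 a, t⁻¹ = Real.log a := by
  rw [integral_Icc_eq_integral_Ioc, ← intervalIntegral.integral_of_le ha,
    integral_inv_of_pos one_pos (one_pos.trans_le ha), div_one]

section EqualRevenue

/-- The equal-revenue density `t⁻²` truncated to `[1, u]`, of mass `1 - u⁻¹`. -/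
noncomputable def equalRevenueDensity (u : ℝ) : ℝ → ℝ :=
  (Icc 1 u).indicator fun t => (t ^ 2)⁻¹

/-- Regularity of a (not necessarily normalized) density: its support is a compact interval on
which the virtual value is nondecreasing. -/
def IsRegularDensity (g : ℝ → ℝ) : Prop :=
  ∃ l u : ℝ, l ≤ u ∧ Function.support g = Icc l u ∧
    MonotoneOn (fun t => t - (∫ t' in Ici t, g t') / g t) (Icc l u)

variable {u r t : ℝ}

lemma equalRevenueDensity_nonneg (u t : ℝ) : 0 ≤ equalRevenueDensity u t :=
  indicator_nonneg (fun _ _ => by positivity) t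

lemma measurable_equalRevenueDensity (u : ℝ) : Measurable (equalRevenueDensity u) :=
  Measurable.indicator (by fun_prop) measurableSet_Icc

lemma integrable_equalRevenueDensity (u : ℝ) : Integrable (equalRevenueDensity u) := by
  refine (integrable_indicator_iff measurableSet_Icc).2 (ContinuousOn.integrableOn_Icc ?_)
  exact ContinuousOn.inv₀ (by fun_prop) fun t ht => pow_ne_zero 2 (one_pos.trans_le ht.1).ne'

lemma support_equalRevenueDensity (u : ℝ) :
    Function.support (equalRevenueDensity u) = Icc 1 u := by
  rw [equalRevenueDensity, Set.support_indicator, inter_eq_left]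
  exact fun t ht => inv_ne_zero (pow_ne_zero 2 (one_pos.trans_le ht.1).ne')

lemma integral_Ici_equalRevenueDensity (h : max r 1 ≤ u) :
    ∫ t in Ici r, equalRevenueDensity u t = (max r 1)⁻¹ - u⁻¹ := by
  have hpos : (0 : ℝ) < max r 1 := lt_max_of_lt_right one_pos
  have hsupport : Ici r ∩ Icc 1 u = Icc (max r 1) u := by
    ext t
    simp [and_assoc]
  rw [equalRevenueDensity, setIntegral_indicator measurableSet_Icc, hsupport,
    integral_Icc_eq_integral_Ioc, ← intervalIntegral.integral_of_le h,
    integral_inv_sq (notMem_uIcc_of_lt hpos (hpos.trans_le h))]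

lemma integral_Ici_equalRevenueDensity_of_lt (h : u < r) :
    ∫ t in Ici r, equalRevenueDensity u t = 0 :=
  setIntegral_eq_zero_of_forall_eq_zero fun _ ht =>
    indicator_of_notMem (fun hmem => (h.trans_le ht).not_ge hmem.2) _

lemma mul_integral_Ici_equalRevenueDensity_le_one (hu : 1 ≤ u) (hr : 0 ≤ r) :
    r * ∫ t in Ici r, equalRevenueDensity u t ≤ 1 := by
  rcases lt_or_ge u r with hur | hru
  · simp [integral_Ici_equalRevenueDensity_of_lt hur]
  · rw [integral_Ici_equalRevenueDensity (max_le hru hu)]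
    calc r * ((max r 1)⁻¹ - u⁻¹) ≤ r * (max r 1)⁻¹ := by
          gcongr
          exact sub_le_self _ (by positivity)
      _ ≤ 1 := mul_inv_le_one_of_le₀ (le_max_left _ _) (by positivity)

lemma virtualValue_equalRevenueDensity (ht : t ∈ Icc 1 u) :
    t - (∫ t' in Ici t, equalRevenueDensity u t') / equalRevenueDensity u t = t ^ 2 * u⁻¹ := by
  have ht0 : 0 < t := one_pos.trans_le ht.1
  have hu0 : 0 < u := ht0.trans_le ht.2
  rw [integral_Ici_equalRevenueDensity (max_le ht.2 (ht.1.trans ht.2)), max_eq_left ht.1,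
    equalRevenueDensity, indicator_of_mem ht]
  field_simp
  ring

lemma isRegularDensity_equalRevenueDensity (hu : 1 ≤ u) :
    IsRegularDensity (equalRevenueDensity u) := by
  refine ⟨1, u, hu, support_equalRevenueDensity u, MonotoneOn.congr (fun a ha b _ hab => ?_)
    fun t ht => (virtualValue_equalRevenueDensity ht).symm⟩
  have ha0 : 0 < a := one_pos.trans_le ha.1
  gcongr

lemma IsRegularDensity.const_mul {g : ℝ → ℝ} (hg : IsRegularDensity g) {w : ℝ} (hw : w ≠ 0) :
    IsRegularDensity fun t => w * g t := by
  obtain ⟨l, u, hlu, hsupport, hmono⟩ := hg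
  refine ⟨l, u, hlu, ?_, ?_⟩
  · rw [← hsupport, ← Function.support_const_smul_of_ne_zero w g hw]
    rfl
  · simpa only [integral_const_mul, mul_div_mul_left _ _ hw] using hmono

end EqualRevenue

section DyadicLevel

/-- The dyadic level of a value: level `0` is `[1, 2]` and level `j > 0` is `(2 ^ j, 2 ^ (j + 1)]`.
The intervals are closed on the right so that a value has level at most `k` exactly when it lies in
the closed support of the density at signal `k`. Values below `1` also get level `0`. -/
noncomputable def dyadicLevel (t : ℝ) : ℕ :=
  Nat.clog 2 ⌈t⌉₊ - 1

/-- The largest value compatible with signal `k` when the levels are `0, …, N`. -/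
noncomputable def signalCap (N k : ℕ) : ℝ :=
  2 ^ (min k N + 1)

variable {N : ℕ} {t : ℝ}

lemma dyadicLevel_le_iff (t : ℝ) (k : ℕ) : dyadicLevel t ≤ k ↔ t ≤ 2 ^ (k + 1) := by
  rw [dyadicLevel, Nat.sub_le_iff_le_add, Nat.clog_le_iff_le_pow one_lt_two, Nat.ceil_le]
  norm_cast

lemma dyadicLevel_one : dyadicLevel 1 = 0 := by
  simp [dyadicLevel]

lemma two_pow_dyadicLevel_le (ht : 1 ≤ t) : 2 ^ dyadicLevel t ≤ t := by
  rcases hlevel : dyadicLevel t with _ | j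
  · simpa using ht
  · have hj : ¬ t ≤ 2 ^ (j + 1) := (dyadicLevel_le_iff t j).not.1 (by omega)
    exact (not_le.1 hj).le

lemma le_two_pow_dyadicLevel_succ (t : ℝ) : t ≤ 2 ^ (dyadicLevel t + 1) :=
  (dyadicLevel_le_iff t _).1 le_rfl

lemma measurable_dyadicLevel : Measurable dyadicLevel :=
  (measurable_from_top (f := fun n : ℕ => Nat.clog 2 n - 1)).comp Nat.measurable_ceil

lemma one_lt_signalCap (N k : ℕ) : 1 < signalCap N k :=
  one_lt_pow₀ one_lt_two (Nat.succ_ne_zero _)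

lemma signalCap_le (N k : ℕ) : signalCap N k ≤ 2 ^ (N + 1) :=
  pow_le_pow_right₀ one_le_two (Nat.succ_le_succ (min_le_right k N))

lemma equalRevenueDensity_signalCap (ht : t ∈ Icc 1 (2 ^ (N + 1))) (k : ℕ) :
    equalRevenueDensity (signalCap N k) t = if dyadicLevel t ≤ k then (t ^ 2)⁻¹ else 0 := by
  have hcap : t ≤ signalCap N k ↔ dyadicLevel t ≤ k := by
    rw [signalCap, ← dyadicLevel_le_iff, le_min_iff,
      and_iff_left ((dyadicLevel_le_iff t N).2 ht.2)]
  simp only [equalRevenueDensity, indicator_apply, mem_Icc, ht.1, hcap, true_and]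

lemma equalRevenueDensity_signalCap_of_notMem (ht : t ∉ Icc 1 (2 ^ (N + 1))) (k : ℕ) :
    equalRevenueDensity (signalCap N k) t = 0 :=
  indicator_of_notMem (fun h => ht ⟨h.1, h.2.trans (signalCap_le N k)⟩) _

lemma sum_equalRevenueDensity_mul (ht : t ∈ Icc 1 (2 ^ (N + 1))) (n : ℕ) (h : ℕ → ℝ) :
    ∑ k : Fin n, equalRevenueDensity (signalCap N k) t * h k =
      (t ^ 2)⁻¹ * ∑ k ∈ Finset.Ico (dyadicLevel t) n, h k := by
  have hIco : Finset.Ico (dyadicLevel t) n = {k ∈ Finset.range n | dyadicLevel t ≤ k} := by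
    ext k
    simp [and_comm]
  rw [Fin.sum_univ_eq_sum_range (fun k => equalRevenueDensity (signalCap N k) t * h k), hIco,
    Finset.sum_filter, Finset.mul_sum]
  simp only [equalRevenueDensity_signalCap ht, ite_mul, mul_ite, zero_mul, mul_zero]

end DyadicLevel

section Menu

/-- The allocation of the menu entry for level `i`: the item is sold at the `L` signals
`i, …, i + L - 1`. -/
noncomputable def windowAlloc (L i k : ℕ) : ℝ :=
  if k ∈ Finset.Ico i (i + L) then 1 else 0

/-- The payment of the menu entry for level `i`: the price `2 ^ i` of the item, minus a bonus at
signal `i`, the one signal of the window that values of higher level never see. The bonus is such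
that the payments add up to `K * 2 ^ i`. -/
noncomputable def windowPayment (L K i k : ℕ) : ℝ :=
  2 ^ i * windowAlloc L i k - if k = i then ((L : ℝ) - K) * 2 ^ i else 0

/-- The utility of a value `t` from the menu entry for level `i`, summed over the signals below `n`
that the value may see. These are equally likely given `t`. -/
noncomputable def menuUtility (L K n : ℕ) (t : ℝ) (i : ℕ) : ℝ :=
  ∑ k ∈ Finset.Ico (dyadicLevel t) n, (t * windowAlloc L i k - windowPayment L K i k)

variable {L K n i j k : ℕ} {t : ℝ}

lemma windowAlloc_mem_Icc (L i k : ℕ) : windowAlloc L i k ∈ Icc (0 : ℝ) 1 := by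
  unfold windowAlloc
  split_ifs <;> simp

lemma windowPayment_le_mul_windowAlloc (hKL : K ≤ L) (ht : 2 ^ i ≤ t) (k : ℕ) :
    windowPayment L K i k ≤ t * windowAlloc L i k := by
  have hKL' : (0 : ℝ) ≤ L - K := sub_nonneg.2 (Nat.cast_le.2 hKL)
  have hbonus : (0 : ℝ) ≤ if k = i then ((L : ℝ) - K) * 2 ^ i else 0 := by
    split_ifs <;> positivity
  have hprice := mul_le_mul_of_nonneg_right ht (windowAlloc_mem_Icc L i k).1
  unfold windowPayment
  linarith

lemma windowPayment_self_neg (hKL : K + 1 < L) (i : ℕ) : windowPayment L K i i < 0 := by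
  have hKL' : (K : ℝ) + 1 < L := by exact_mod_cast hKL
  have hneg : (2 : ℝ) ^ i * (1 - (L - K)) < 0 :=
    mul_neg_of_pos_of_neg (by positivity) (by linarith)
  have halloc : windowAlloc L i i = 1 := if_pos (Finset.mem_Ico.2 ⟨le_rfl, by omega⟩)
  rw [windowPayment, if_pos rfl, halloc]
  linarith

lemma sum_Ico_windowAlloc (h : i + L ≤ n) (j : ℕ) :
    ∑ k ∈ Finset.Ico j n, windowAlloc L i k = (i + L - max i j : ℕ) := by
  simp only [windowAlloc, Finset.sum_boole]
  congr 1
  rw [← Nat.card_Ico]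
  congr 1
  ext k
  simp only [Finset.mem_filter, Finset.mem_Ico]
  omega

lemma sum_Ico_windowPayment_of_le (hji : j ≤ i) (h : i + L < n) :
    ∑ k ∈ Finset.Ico j n, windowPayment L K i k = K * 2 ^ i := by
  have hbonus : i ∈ Finset.Ico j n := Finset.mem_Ico.2 ⟨hji, by omega⟩
  simp only [windowPayment]
  rw [Finset.sum_sub_distrib, ← Finset.mul_sum, sum_Ico_windowAlloc h.le, Finset.sum_ite_eq',
    if_pos hbonus, max_eq_left hji, Nat.add_sub_cancel_left]
  ring

lemma sum_Ico_windowPayment_of_lt (hij : i < j) (h : i + L ≤ n) :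
    ∑ k ∈ Finset.Ico j n, windowPayment L K i k = 2 ^ i * (i + L - j : ℕ) := by
  have hbonus : i ∉ Finset.Ico j n := fun hi => hij.not_ge (Finset.mem_Ico.1 hi).1
  simp only [windowPayment]
  rw [Finset.sum_sub_distrib, ← Finset.mul_sum, sum_Ico_windowAlloc h, Finset.sum_ite_eq',
    if_neg hbonus, max_eq_right hij.le, sub_zero]

lemma menuUtility_of_le (hi : dyadicLevel t ≤ i) (h : i + L < n) :
    menuUtility L K n t i = L * t - K * 2 ^ i := by
  rw [menuUtility, Finset.sum_sub_distrib, ← Finset.mul_sum, sum_Ico_windowAlloc h.le,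
    sum_Ico_windowPayment_of_le hi h, max_eq_left hi, Nat.add_sub_cancel_left, mul_comm t]

lemma menuUtility_of_lt (hi : i < dyadicLevel t) (h : i + L ≤ n) :
    menuUtility L K n t i = (i + L - dyadicLevel t : ℕ) * (t - 2 ^ i) := by
  rw [menuUtility, Finset.sum_sub_distrib, ← Finset.mul_sum, sum_Ico_windowAlloc h,
    sum_Ico_windowPayment_of_lt hi h, max_eq_right hi.le]
  ring

/-- Underreporting by `d = j - i` levels forgoes the item at `d` signals. If `K ≤ d` this loss of
`d * t` already exceeds the truthful payment `K * 2 ^ j`; if `d < K` then so do the prices paid at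
the remaining `L - d` signals. -/
lemma underreport_utility_le (hL : K * (1 + 2 ^ K) ≤ L) (hij : i < j) (ht : 2 ^ j ≤ t) :
    (i + L - j : ℕ) * (t - 2 ^ i) ≤ L * t - K * 2 ^ j := by
  have ht0 : 0 ≤ t := le_trans (by positivity) ht
  have hKL : K ≤ L := (Nat.le_mul_of_pos_right K (by positivity)).trans hL
  obtain ⟨d, rfl⟩ := Nat.exists_eq_add_of_lt hij
  rcases le_or_gt K (d + 1) with hKd | hdK
  · have hcount : ((i + L - (i + d + 1) : ℕ) : ℝ) ≤ L - K := by
      rw [← Nat.cast_sub hKL, Nat.cast_le]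
      omega
    calc ((i + L - (i + d + 1) : ℕ) : ℝ) * (t - 2 ^ i)
        ≤ (i + L - (i + d + 1) : ℕ) * t := by
          gcongr
          exact sub_le_self t (by positivity)
      _ ≤ (L - K) * t := by gcongr
      _ ≤ L * t - K * 2 ^ (i + d + 1) := by
          rw [sub_mul]
          gcongr
  · have hcount : ((i + L - (i + d + 1) : ℕ) : ℝ) = L - (d + 1) := by
      rw [show i + L - (i + d + 1) = L - (d + 1) by omega, Nat.cast_sub (by omega)]
      push_cast
      rfl
    have hprices : (K : ℝ) * 2 ^ (d + 1) ≤ L - (d + 1) := by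
      have hL' : (K : ℝ) * (1 + 2 ^ K) ≤ L := by exact_mod_cast hL
      have hdK' : (d : ℝ) + 1 ≤ K := by exact_mod_cast hdK.le
      have hpow : (K : ℝ) * 2 ^ (d + 1) ≤ K * 2 ^ K := by gcongr; norm_num
      linarith
    calc ((i + L - (i + d + 1) : ℕ) : ℝ) * (t - 2 ^ i)
        = L * t - (d + 1) * t - (L - (d + 1)) * 2 ^ i := by rw [hcount]; ring
      _ ≤ L * t - 0 - K * 2 ^ (d + 1) * 2 ^ i := by gcongr; positivity
      _ = L * t - K * 2 ^ (i + d + 1) := by ring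

lemma menuUtility_le_truthful (hL : K * (1 + 2 ^ K) ≤ L) (ht : 1 ≤ t) (hi : i + L < n)
    (htn : dyadicLevel t + L < n) :
    menuUtility L K n t i ≤ menuUtility L K n t (dyadicLevel t) := by
  rw [menuUtility_of_le le_rfl htn]
  rcases le_or_gt (dyadicLevel t) i with hup | hdown
  · rw [menuUtility_of_le hup hi]
    gcongr
    exact one_le_two
  · rw [menuUtility_of_lt hdown hi.le]
    exact underreport_utility_le hL hdown (two_pow_dyadicLevel_le ht)

lemma menuUtility_truthful_nonneg (hKL : K ≤ L) (ht : 1 ≤ t) :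
    0 ≤ menuUtility L K n t (dyadicLevel t) :=
  Finset.sum_nonneg fun k _ =>
    sub_nonneg.2 (windowPayment_le_mul_windowAlloc hKL (two_pow_dyadicLevel_le ht) k)

end Menu

section LevelRule

/-- The rule that applies the menu entry `g i` to the reports of level `i ≤ N` in `[1, 2 ^ (N + 1)]`
and lets all other reports opt out. -/
noncomputable def levelRule (N : ℕ) (g : ℕ → ℕ → ℝ) (t : ℝ) (k : ℕ) : ℝ :=
  (Icc 1 (2 ^ (N + 1))).indicator (fun t => g (dyadicLevel t) k) t

variable {N : ℕ} {t : ℝ}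

lemma levelRule_of_mem (ht : t ∈ Icc 1 (2 ^ (N + 1))) (g : ℕ → ℕ → ℝ) (k : ℕ) :
    levelRule N g t k = g (dyadicLevel t) k :=
  indicator_of_mem ht _

lemma levelRule_of_notMem (ht : t ∉ Icc 1 (2 ^ (N + 1))) (g : ℕ → ℕ → ℝ) (k : ℕ) :
    levelRule N g t k = 0 :=
  indicator_of_notMem ht _

lemma measurable_levelRule (N : ℕ) (g : ℕ → ℕ → ℝ) (k : ℕ) :
    Measurable fun t => levelRule N g t k :=
  ((measurable_from_top (f := fun i => g i k)).comp measurable_dyadicLevel).indicator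
    measurableSet_Icc

lemma measurable_uncurry_levelRule (N n : ℕ) (g : ℕ → ℕ → ℝ) :
    Measurable fun q : ℝ × Fin n => levelRule N g q.1 q.2 :=
  measurable_from_prod_countable_left fun k => measurable_levelRule N g k

lemma abs_levelRule_le (N : ℕ) (g : ℕ → ℕ → ℝ) (t : ℝ) (k : ℕ) :
    |levelRule N g t k| ≤ ∑ i ∈ Finset.range (N + 1), |g i k| := by
  by_cases ht : t ∈ Icc 1 (2 ^ (N + 1))
  · rw [levelRule_of_mem ht]
    have hlevel : dyadicLevel t ∈ Finset.range (N + 1) :=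
      Finset.mem_range_succ_iff.2 ((dyadicLevel_le_iff t N).2 ht.2)
    exact Finset.single_le_sum (f := fun i => |g i k|) (fun i _ => abs_nonneg _) hlevel
  · rw [levelRule_of_notMem ht, abs_zero]
    exact Finset.sum_nonneg fun i _ => abs_nonneg _

lemma integrable_equalRevenueDensity_mul_levelRule (u : ℝ) (N : ℕ) (g : ℕ → ℕ → ℝ) (k : ℕ) :
    Integrable fun t => equalRevenueDensity u t * levelRule N g t k :=
  (integrable_equalRevenueDensity u).mul_bdd (measurable_levelRule N g k).aestronglyMeasurable
    (ae_of_all _ fun t => abs_levelRule_le N g t k)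

lemma levelRule_windowAlloc_mem_Icc (N L : ℕ) (t : ℝ) (k : ℕ) :
    levelRule N (windowAlloc L) t k ∈ Icc (0 : ℝ) 1 := by
  by_cases ht : t ∈ Icc 1 (2 ^ (N + 1))
  · rw [levelRule_of_mem ht]
    exact windowAlloc_mem_Icc L _ k
  · simp [levelRule_of_notMem ht]

lemma levelRule_exPostIR {L K : ℕ} (hKL : K ≤ L) (N : ℕ) (t : ℝ) (k : ℕ) :
    0 ≤ t * levelRule N (windowAlloc L) t k - levelRule N (windowPayment L K) t k := by
  by_cases ht : t ∈ Icc 1 (2 ^ (N + 1))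
  · rw [levelRule_of_mem ht, levelRule_of_mem ht, sub_nonneg]
    exact windowPayment_le_mul_windowAlloc hKL (two_pow_dyadicLevel_le ht.1) k
  · simp [levelRule_of_notMem ht]

lemma levelRule_windowPayment_one_neg {L K : ℕ} (hKL : K + 1 < L) (N : ℕ) :
    levelRule N (windowPayment L K) 1 0 < 0 := by
  rw [levelRule_of_mem ⟨le_rfl, one_le_pow₀ one_le_two⟩, dyadicLevel_one]
  exact windowPayment_self_neg hKL 0

end LevelRule

section Ladder

variable (N L : ℕ)

/-- The total mass of the densities `equalRevenueDensity (signalCap N k)` for `k < N + 1 + L`. -/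
noncomputable def ladderMass : ℝ :=
  ∑ k : Fin (N + 1 + L), (1 - (signalCap N k)⁻¹)

lemma ladderMass_pos : 0 < ladderMass N L := by
  have : NeZero (N + 1 + L) := ⟨by omega⟩
  exact Finset.sum_pos
    (fun k _ => sub_pos.2 (inv_lt_one_of_one_lt₀ (one_lt_signalCap N k))) Finset.univ_nonempty

/-- The instance in which signal `k` comes with the equal-revenue distribution on
`[1, signalCap N k]`. There are `N + 1` levels of values, and `L` more signals than levels, so that
the window of `L` signals following each level is available. -/
noncomputable def ladderInstance : SignalInstance where
  S := Fin (N + 1 + L)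
  μ := Measure.count
  sigmaFinite := inferInstance
  f t k := (ladderMass N L)⁻¹ * equalRevenueDensity (signalCap N k) t
  f_meas := measurable_from_prod_countable_left fun k =>
    (measurable_equalRevenueDensity (signalCap N k)).const_mul _
  f_nonneg t k :=
    mul_nonneg (inv_nonneg.2 (ladderMass_pos N L).le) (equalRevenueDensity_nonneg _ t)
  f_zero t k ht := by
    rw [equalRevenueDensity, indicator_of_notMem (fun h => by linarith [h.1]), mul_zero]
  f_prob := by
    have hmass (k : ℕ) :
        ∫ t in Ici (0 : ℝ), equalRevenueDensity (signalCap N k) t = 1 - (signalCap N k)⁻¹ := by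
      rw [integral_Ici_equalRevenueDensity (by simpa using (one_lt_signalCap N k).le),
        max_eq_right zero_le_one, inv_one]
    simp only [integral_const_mul, integral_count, hmass]
    exact inv_mul_cancel₀ (ladderMass_pos N L).ne'

lemma integral_ladderInstance (g : (ladderInstance N L).S → ℝ) :
    ∫ k, g k ∂(ladderInstance N L).μ = ∑ k : Fin (N + 1 + L), g k :=
  integral_count (X := Fin (N + 1 + L)) g

lemma isRegularDensity_ladderInstance (k : Fin (N + 1 + L)) :
    IsRegularDensity fun t => (ladderInstance N L).f t k :=
  (isRegularDensity_equalRevenueDensity (one_lt_signalCap N k).le).const_mul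
    (inv_pos.2 (ladderMass_pos N L)).ne'

lemma ladderInstance_DRev_le : (ladderInstance N L).DRev ≤ (ladderMass N L)⁻¹ * (N + 1 + L) := by
  have hw : 0 < (ladderMass N L)⁻¹ := inv_pos.2 (ladderMass_pos N L)
  have hprice (k : Fin (N + 1 + L)) :
      sSup {y : ℝ | ∃ r : ℝ, 0 ≤ r ∧ y = r * ∫ t in Ici r, (ladderInstance N L).f t k} ≤
        (ladderMass N L)⁻¹ := by
    refine Real.sSup_le ?_ hw.le
    rintro y ⟨r, hr, rfl⟩
    simp only [ladderInstance, integral_const_mul]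
    rw [mul_left_comm]
    exact mul_le_of_le_one_right hw.le
      (mul_integral_Ici_equalRevenueDensity_le_one (one_lt_signalCap N k).le hr)
  calc (ladderInstance N L).DRev ≤ ∑ _k : Fin (N + 1 + L), (ladderMass N L)⁻¹ :=
        (integral_ladderInstance N L _).trans_le (Finset.sum_le_sum fun k _ => hprice k)
    _ = (ladderMass N L)⁻¹ * (N + 1 + L) := by
        rw [Finset.sum_const, Finset.card_univ, Fintype.card_fin, nsmul_eq_mul, mul_comm]
        push_cast
        rfl

variable {N L} {K : ℕ} {t : ℝ}

lemma integral_ladderInstance_mul (ht : t ∈ Icc 1 (2 ^ (N + 1))) (h : ℕ → ℝ) :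
    ∫ k, (ladderInstance N L).f t k * h k.val ∂(ladderInstance N L).μ =
      (ladderMass N L)⁻¹ * (t ^ 2)⁻¹ *
        ∑ k ∈ Finset.Ico (dyadicLevel t) (N + 1 + L), h k := by
  rw [integral_ladderInstance]
  simp only [ladderInstance, mul_assoc]
  rw [← Finset.mul_sum, sum_equalRevenueDensity_mul ht]

lemma sum_levelRule_utility_le (hL : K * (1 + 2 ^ K) ≤ L) (ht : t ∈ Icc 1 (2 ^ (N + 1)))
    (t' : ℝ) :
    ∑ k ∈ Finset.Ico (dyadicLevel t) (N + 1 + L),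
        (t * levelRule N (windowAlloc L) t' k - levelRule N (windowPayment L K) t' k) ≤
      ∑ k ∈ Finset.Ico (dyadicLevel t) (N + 1 + L),
        (t * levelRule N (windowAlloc L) t k - levelRule N (windowPayment L K) t k) := by
  have hlevel {v : ℝ} (hv : v ∈ Icc 1 (2 ^ (N + 1))) : dyadicLevel v + L < N + 1 + L := by
    have := (dyadicLevel_le_iff v N).2 hv.2
    omega
  simp only [levelRule_of_mem ht]
  by_cases ht' : t' ∈ Icc 1 (2 ^ (N + 1))
  · simp only [levelRule_of_mem ht']
    exact menuUtility_le_truthful hL ht.1 (hlevel ht') (hlevel ht)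
  · simp only [levelRule_of_notMem ht', mul_zero, sub_zero, Finset.sum_const_zero]
    exact menuUtility_truthful_nonneg
      ((Nat.le_mul_of_pos_right K (by positivity)).trans hL) ht.1

lemma ladderInstance_bic (hL : K * (1 + 2 ^ K) ≤ L) (t t' : ℝ) :
    ∫ k, (ladderInstance N L).f t k *
        (t * levelRule N (windowAlloc L) t' k.val - levelRule N (windowPayment L K) t' k.val)
          ∂(ladderInstance N L).μ ≤
      ∫ k, (ladderInstance N L).f t k *
        (t * levelRule N (windowAlloc L) t k.val - levelRule N (windowPayment L K) t k.val)
          ∂(ladderInstance N L).μ := by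
  by_cases ht : t ∈ Icc 1 (2 ^ (N + 1))
  · have hw := ladderMass_pos N L
    rw [integral_ladderInstance_mul ht fun k =>
        t * levelRule N (windowAlloc L) t' k - levelRule N (windowPayment L K) t' k,
      integral_ladderInstance_mul ht fun k =>
        t * levelRule N (windowAlloc L) t k - levelRule N (windowPayment L K) t k]
    gcongr ?_ * ?_
    exact sum_levelRule_utility_le hL ht t'
  · simp only [ladderInstance, equalRevenueDensity_signalCap_of_notMem ht, mul_zero, zero_mul,
      le_refl]

lemma indicator_inv_le_sum_payment (t : ℝ) :
    (Icc 1 (2 ^ (N + 1))).indicator (fun t => (K : ℝ) / 2 * t⁻¹) t ≤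
      ∑ k : Fin (N + 1 + L), equalRevenueDensity (signalCap N k) t *
        levelRule N (windowPayment L K) t k := by
  by_cases ht : t ∈ Icc 1 (2 ^ (N + 1))
  · have ht0 : 0 < t := one_pos.trans_le ht.1
    have hlevel : dyadicLevel t ≤ N := (dyadicLevel_le_iff t N).2 ht.2
    rw [indicator_of_mem ht, sum_equalRevenueDensity_mul ht _ (levelRule N (windowPayment L K) t)]
    simp only [levelRule_of_mem ht]
    rw [sum_Ico_windowPayment_of_le le_rfl (by omega)]
    calc (K : ℝ) / 2 * t⁻¹ = (t ^ 2)⁻¹ * (K * (t / 2)) := by field_simp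
      _ ≤ (t ^ 2)⁻¹ * (K * 2 ^ dyadicLevel t) := by
          gcongr
          rw [div_le_iff₀ two_pos, ← pow_succ]
          exact le_two_pow_dyadicLevel_succ t
  · simp only [indicator_of_notMem ht, equalRevenueDensity_signalCap_of_notMem ht, zero_mul,
      Finset.sum_const_zero, le_refl]

lemma le_ladderInstance_Rev (N L K : ℕ) :
    (ladderMass N L)⁻¹ * (K / 2 * ((N + 1) * Real.log 2)) ≤
      (ladderInstance N L).Rev fun t k => levelRule N (windowPayment L K) t k.val := by
  have hpayment (k : Fin (N + 1 + L)) := integrable_equalRevenueDensity_mul_levelRule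
    (signalCap N k) N (windowPayment L K) k
  have hinv : IntegrableOn (fun t : ℝ => (K : ℝ) / 2 * t⁻¹) (Icc 1 (2 ^ (N + 1))) :=
    ContinuousOn.integrableOn_Icc <| continuousOn_const.mul <|
      continuousOn_id.inv₀ fun t ht => (one_pos.trans_le ht.1).ne'
  have hw := ladderMass_pos N L
  have hRev : (ladderInstance N L).Rev (fun t k => levelRule N (windowPayment L K) t k.val) =
      (ladderMass N L)⁻¹ * ∫ t in Ici (0 : ℝ), ∑ k : Fin (N + 1 + L),
        equalRevenueDensity (signalCap N k) t * levelRule N (windowPayment L K) t k := by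
    rw [SignalInstance.Rev, integral_finsetSum _ fun k _ => (hpayment k).integrableOn,
      Finset.mul_sum]
    refine (integral_ladderInstance N L _).trans (Finset.sum_congr rfl fun k _ => ?_)
    simp only [ladderInstance, mul_assoc, integral_const_mul]
  rw [hRev]
  gcongr
  calc (K : ℝ) / 2 * ((N + 1) * Real.log 2)
      = ∫ t in Icc 1 (2 ^ (N + 1)), (K : ℝ) / 2 * t⁻¹ := by
        rw [integral_const_mul, integral_Icc_one_inv (one_le_pow₀ one_le_two), Real.log_pow,
          Nat.cast_succ]
    _ = ∫ t in Ici 0, (Icc 1 (2 ^ (N + 1))).indicator (fun t => (K : ℝ) / 2 * t⁻¹) t := by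
        rw [setIntegral_indicator measurableSet_Icc,
          inter_eq_right.2 (Icc_subset_Ici_self.trans (Ici_subset_Ici.2 zero_le_one))]
    _ ≤ _ := integral_mono ((integrable_indicator_iff measurableSet_Icc).2 hinv).integrableOn
        (integrable_finsetSum _ fun k _ => hpayment k).integrableOn indicator_inv_le_sum_payment

end Ladder

/-- Up to the common factor `(ladderMass L L)⁻¹`, pricing under public signals earns at most `1` per
signal and the mechanism earns at least `K * log 2 / 2` per level, and more than half as many levels
as signals are present. -/
lemma mul_ladderInstance_DRev_le_Rev {M : ℝ} (hM : 0 ≤ M) {K : ℕ} (hK : 8 * M ≤ K) (L : ℕ) :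
    M * (ladderInstance L L).DRev ≤
      (ladderInstance L L).Rev fun t k => levelRule L (windowPayment L K) t k.val := by
  have hw := ladderMass_pos L L
  calc M * (ladderInstance L L).DRev ≤ M * ((ladderMass L L)⁻¹ * (L + 1 + L)) := by
        gcongr
        exact ladderInstance_DRev_le L L
    _ ≤ M * ((ladderMass L L)⁻¹ * (2 * (L + 1))) := by
        gcongr
        linarith
    _ = (ladderMass L L)⁻¹ * (8 * M / 2 * ((L + 1) * (1 / 2))) := by ring
    _ ≤ (ladderMass L L)⁻¹ * (K / 2 * ((L + 1) * Real.log 2)) := by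
        gcongr
        linarith [Real.log_two_gt_d9]
    _ ≤ _ := le_ladderInstance_Rev L L K

/-- **Unbounded gap with negative payments.**  For every `M > 0` there exists a
single-buyer pricing instance with signals whose conditional value distribution given each
signal is regular, together with an ex post IR, BIC mechanism — which makes negative
payments, i.e. sometimes pays the buyer — whose expected revenue is at least `M` times the
optimal revenue under public signals of that instance. -/
theorem exists_regular_instance_private_revenue_ge_mul_public (M : ℝ) (hM : 0 < M) :
    ∃ (I : SignalInstance) (x p : ℝ → I.S → ℝ),
      -- the conditional value distribution given each signal is regular
      (∀ s : I.S, ∃ l u : ℝ, l ≤ u ∧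
        Function.support (fun t => I.f t s) = Icc l u ∧
        MonotoneOn (fun t => t - (∫ t' in Ici t, I.f t' s) / I.f t s) (Icc l u)) ∧
      Measurable (fun q : ℝ × I.S => x q.1 q.2) ∧
      Measurable (fun q : ℝ × I.S => p q.1 q.2) ∧
      (∀ t s, 0 ≤ t → x t s ∈ Icc (0:ℝ) 1) ∧
      -- ex post individual rationality
      (∀ t s, 0 ≤ t → 0 ≤ t * x t s - p t s) ∧
      -- Bayesian incentive compatibility
      (∀ t t' : ℝ, 0 ≤ t → 0 ≤ t' →
        ∫ s, I.f t s * (t * x t' s - p t' s) ∂I.μ ≤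
          ∫ s, I.f t s * (t * x t s - p t s) ∂I.μ) ∧
      -- the mechanism makes negative payments (sometimes pays the buyer)
      (∃ t s, 0 ≤ t ∧ p t s < 0) ∧
      M * I.DRev ≤ I.Rev p := by
  obtain ⟨K, hK⟩ := exists_nat_ge (8 * M)
  obtain ⟨L, hbic, hbonus⟩ : ∃ L, K * (1 + 2 ^ K) ≤ L ∧ K + 2 ≤ L :=
    ⟨max (K * (1 + 2 ^ K)) (K + 2), le_max_left _ _, le_max_right _ _⟩
  exact ⟨ladderInstance L L, fun t k => levelRule L (windowAlloc L) t k.val,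
    fun t k => levelRule L (windowPayment L K) t k.val,
    isRegularDensity_ladderInstance L L,
    measurable_uncurry_levelRule L _ _,
    measurable_uncurry_levelRule L _ _,
    fun t k _ => levelRule_windowAlloc_mem_Icc L L t k.val,
    fun t k _ => levelRule_exPostIR (by omega) L t k.val,
    fun t t' _ _ => ladderInstance_bic hbic t t',
    ⟨1, ⟨0, by omega⟩, zero_le_one, levelRule_windowPayment_one_neg hbonus L⟩,
    mul_ladderInstance_DRev_le_Rev hM.le hK L⟩
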